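/- arXiv:2303.10631 — 3 statements merged into one kernel-verified Lean document; each statement's English description precedes it below -/
import Mathlib

section
/- Let p be a prime and k ∈ ℕ. Then every semantically trim bideterministic weighted automaton over the ring ℤ/p^kℤ is minimal: every weighted automaton over ℤ/p^kℤ with the same behaviour has at least as many states. -/
/-- A weighted automaton over a semiring `S` and alphabet `α`:
a finite type of states `Q`, a transition weighting `σ`, an initial
weighting `ι` and a terminal weighting `τ`. -/
structure WeightedAutomaton (S : Type) [Semiring S] (α : Type) : Type 1 where
  Q : Type
  [fintypeQ : Fintype Q]
  σ : Q → α → Q → S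
  ι : Q → S
  τ : Q → S

namespace WeightedAutomaton

attribute [instance] fintypeQ

variable {S : Type} [Semiring S] {α : Type}

/-- The "future" of a state on a word: the sum, over all runs from this state
upon the word, of the product of the transition weights times the terminal
weight of the last state.  (Sequences of states using a zero-weight transition
contribute zero, so this is exactly the sum over runs.) -/
def future (A : WeightedAutomaton S α) : List α → A.Q → S
  | [], q => A.τ q
  | c :: w, q => ∑ p : A.Q, A.σ q c p * A.future w p

/-- The behaviour of a weighted automaton: the series sending each word `w`
to the sum of the monomial weights `ι(q₀)·σ(q₀,c₁,q₁)⋯σ(q_{n−1},cₙ,qₙ)·τ(qₙ)`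
of all runs of the automaton upon `w`. -/
def behaviour (A : WeightedAutomaton S α) (w : List α) : S :=
  ∑ q : A.Q, A.ι q * A.future w q

/-- A weighted automaton is bideterministic if at most one state has nonzero
initial weight, at most one state has nonzero terminal weight, and for every
letter each state has at most one outgoing and at most one incoming transition
with nonzero weight upon that letter. -/
def Bideterministic (A : WeightedAutomaton S α) : Prop :=
  (∀ p q, A.ι p ≠ 0 → A.ι q ≠ 0 → p = q) ∧
  (∀ p q, A.τ p ≠ 0 → A.τ q ≠ 0 → p = q) ∧
  (∀ p c q q', A.σ p c q ≠ 0 → A.σ p c q' ≠ 0 → q = q') ∧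
  (∀ p p' c q, A.σ p c q ≠ 0 → A.σ p' c q ≠ 0 → p = p')

/-- `A.IsPath q l` : starting in state `q`, the list `l` of (letter, next state)
pairs follows transitions all of which have nonzero weight, i.e. it is a run. -/
def IsPath (A : WeightedAutomaton S α) : A.Q → List (α × A.Q) → Prop
  | _, [] => True
  | q, (c, q') :: l => A.σ q c q' ≠ 0 ∧ A.IsPath q' l

/-- The last state of a path. -/
def pathEnd (A : WeightedAutomaton S α) : A.Q → List (α × A.Q) → A.Q
  | q, [] => q
  | _, (_, q') :: l => A.pathEnd q' l

/-- The product of the transition weights along a path. -/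
def pathWeight (A : WeightedAutomaton S α) : A.Q → List (α × A.Q) → S
  | _, [] => 1
  | q, (c, q') :: l => A.σ q c q' * A.pathWeight q' l

/-- A state is accessible if some run from a state with nonzero initial weight
ends in it. -/
def Accessible (A : WeightedAutomaton S α) (q : A.Q) : Prop :=
  ∃ p l, A.ι p ≠ 0 ∧ A.IsPath p l ∧ A.pathEnd p l = q

/-- A state is coaccessible if some run from it ends in a state with nonzero
terminal weight. -/
def Coaccessible (A : WeightedAutomaton S α) (q : A.Q) : Prop :=
  ∃ l, A.IsPath q l ∧ A.τ (A.pathEnd q l) ≠ 0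

/-- A weighted automaton is trim if all its states are accessible and
coaccessible. -/
def Trim (A : WeightedAutomaton S α) : Prop :=
  ∀ q, A.Accessible q ∧ A.Coaccessible q

/-- A weighted automaton is semantically trim if every state lies on some run
whose monomial weight is nonzero. -/
def SemanticallyTrim (A : WeightedAutomaton S α) : Prop :=
  ∀ q, ∃ p l, A.IsPath p l ∧ (q = p ∨ q ∈ l.map Prod.snd) ∧
    A.ι p * A.pathWeight p l * A.τ (A.pathEnd p l) ≠ 0

/-- The number of states of a weighted automaton. -/
def states (A : WeightedAutomaton S α) : ℕ := Fintype.card A.Q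

/-- A weighted automaton is minimal if every weighted automaton over the same
semiring and alphabet with the same behaviour has at least as many states. -/
def Minimal (A : WeightedAutomaton S α) : Prop :=
  ∀ B : WeightedAutomaton S α, B.behaviour = A.behaviour → A.states ≤ B.states

end WeightedAutomaton

/-!
A state `q` on a run of nonzero weight splits that run into a word `u` leading to `q` and a word `v`
leading from `q`. In a bideterministic automaton the past of `u` and the future of `v` are then both
concentrated at `q`, so the corresponding square block of the Hankel matrix is diagonal with nonzero
entries. For any automaton with the same behaviour this block factors through its set of states.

If any two elements of the ring are comparable under divisibility, Gaussian elimination gives every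
matrix with more columns than rows a kernel vector having an entry equal to `1`. A diagonal matrix
without zero entries on the diagonal has no such kernel vector, so it cannot factor through a
smaller index set. Finally, `ℤ/p^kℤ` inherits total divisibility from the `p`-adic integers.
-/

open Matrix

theorem exists_forall_dvd_of_preValuationRing {M ι : Type*} [Monoid M] [PreValuationRing M]
    [Finite ι] [Nonempty ι] (f : ι → M) : ∃ j, ∀ i, f j ∣ f i := by
  have : Std.Total fun a b : M => b ∣ a := ⟨fun a b => ValuationRing.dvd_total b a⟩
  have : IsTrans M fun a b => b ∣ a := ⟨fun _ _ _ hba hcb => hcb.trans hba⟩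
  exact (Std.Total.directed (r := fun a b : M => b ∣ a) f).finite_le id

section PreValuationRing

variable {R : Type*} [Ring R] [PreValuationRing R]

/-- One elimination step: `E` parametrises solutions of `f ⬝ᵥ w = 0` by solving for the variable
`w j`, whose coefficient divides all the others. -/
theorem exists_vecMul_eq_zero_and_submatrix_succAbove_eq_one {n : ℕ} (f : Fin (n + 1) → R) :
    ∃ (j : Fin (n + 1)) (E : Matrix (Fin (n + 1)) (Fin n) R),
      f ᵥ* E = 0 ∧ E.submatrix j.succAbove id = 1 := by
  obtain ⟨j, hj⟩ := exists_forall_dvd_of_preValuationRing f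
  choose a ha using fun i => hj (j.succAbove i)
  let E : Matrix (Fin (n + 1)) (Fin n) R :=
    of (j.insertNth (α := fun _ => Fin n → R) (-a) (1 : Matrix (Fin n) (Fin n) R))
  have hEj : E j = -a := Fin.insertNth_apply_same (α := fun _ => Fin n → R) j _ _
  have hE : E.submatrix j.succAbove id = 1 :=
    funext fun i => Fin.insertNth_apply_succAbove (α := fun _ => Fin n → R) j _ _ i
  refine ⟨j, E, ?_, hE⟩
  ext k
  calc (f ᵥ* E) k = f j * E j k + ∑ i, f (j.succAbove i) * E.submatrix j.succAbove id i k :=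
        Fin.sum_univ_succAbove _ j
    _ = f j * -a k + f (j.succAbove k) := by
        simp [hE, hEj, one_apply, -submatrix_apply]
    _ = 0 := by rw [ha k, mul_neg, neg_add_cancel]

theorem exists_eq_one_and_mulVec_eq_zero_of_lt {m n : ℕ} (hmn : m < n)
    (Y : Matrix (Fin m) (Fin n) R) : ∃ w : Fin n → R, (∃ i, w i = 1) ∧ Y *ᵥ w = 0 := by
  induction m generalizing n with
  | zero => exact ⟨1, ⟨⟨0, hmn⟩, rfl⟩, Subsingleton.elim _ _⟩
  | succ m ih =>
    obtain _ | n := n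
    · exact absurd hmn (Nat.not_lt_zero _)
    obtain ⟨j, E, hE, hEj⟩ := exists_vecMul_eq_zero_and_submatrix_succAbove_eq_one (Y 0)
    obtain ⟨w, ⟨i, hi⟩, hw⟩ := ih (Nat.lt_of_succ_lt_succ hmn) (Y.submatrix Fin.succ id * E)
    have hEw : (E *ᵥ w) (j.succAbove i) = w i :=
      calc (E *ᵥ w) (j.succAbove i) = (E.submatrix j.succAbove id *ᵥ w) i := rfl
        _ = w i := by rw [hEj, one_mulVec]
    refine ⟨E *ᵥ w, ⟨j.succAbove i, hEw.trans hi⟩, ?_⟩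
    ext r
    induction r using Fin.cases with
    | zero =>
      calc Y 0 ⬝ᵥ (E *ᵥ w) = (Y 0 ᵥ* E) ⬝ᵥ w := dotProduct_mulVec _ _ _
        _ = 0 := by rw [hE, zero_dotProduct]
    | succ r =>
      calc (Y.submatrix Fin.succ id *ᵥ (E *ᵥ w)) r = ((Y.submatrix Fin.succ id * E) *ᵥ w) r := by
            rw [mulVec_mulVec]
        _ = 0 := congrFun hw r

theorem card_le_card_of_mul_eq_diagonal {m n : Type*} [Fintype m] [Fintype n] [DecidableEq n]
    {X : Matrix n m R} {Y : Matrix m n R} {d : n → R} (hd : ∀ i, d i ≠ 0)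
    (hXY : X * Y = diagonal d) : Fintype.card n ≤ Fintype.card m := by
  by_contra! hlt
  let em := Fintype.equivFin m
  let en := Fintype.equivFin n
  obtain ⟨w, ⟨i, hi⟩, hw⟩ := exists_eq_one_and_mulVec_eq_zero_of_lt hlt (reindex em en Y)
  have hYw : Y *ᵥ (w ∘ en) = 0 := by
    ext r
    simpa [submatrix_mulVec_equiv] using congrFun hw (em r)
  have hdw : diagonal d *ᵥ (w ∘ en) = 0 := by
    rw [← hXY, ← mulVec_mulVec, hYw, mulVec_zero]
  apply hd (en.symm i)
  simpa [mulVec_diagonal, hi] using congrFun hdw (en.symm i)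

end PreValuationRing

theorem preValuationRing_zmod_prime_pow (p k : ℕ) [Fact p.Prime] :
    PreValuationRing (ZMod (p ^ k)) :=
  (ZMod.ringHom_surjective (PadicInt.toZModPow k)).preValuationRing
    (PadicInt.toZModPow (p := p) k : ℤ_[p] →ₙ* ZMod (p ^ k))

theorem eq_piSingle_of_forall_ne_zero {ι M : Type*} [DecidableEq ι] [Zero M] {f : ι → M} {i : ι}
    (h : ∀ j, f j ≠ 0 → j = i) : f = Pi.single i (f i) := by
  ext j
  obtain rfl | hji := eq_or_ne j i
  · rw [Pi.single_eq_same]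
  · rw [Pi.single_eq_of_ne hji]
    exact not_not.mp (mt (h j) hji)

namespace WeightedAutomaton

variable {S : Type} [Semiring S] {α : Type} (A : WeightedAutomaton S α)

/-- The transition matrix of a letter. -/
def transition (c : α) : Matrix A.Q A.Q S := of fun p q => A.σ p c q

/-- The row vector `x` pushed through the transition matrices of a word, read from left to right. -/
def pushforward (x : A.Q → S) (w : List α) : A.Q → S :=
  w.foldl (fun y c => y ᵥ* A.transition c) x

/-- The past of a word: the vector sending each state to the total weight (initial weight included)
of the runs upon the word ending in that state. It is the counterpart of `future`. -/
def past (w : List α) : A.Q → S := A.pushforward A.ι w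

/-- The Hankel matrix of the behaviour of an automaton. -/
def hankel : Matrix (List α) (List α) S := of fun u v => A.behaviour (u ++ v)

theorem future_cons (c : α) (w : List α) :
    A.future (c :: w) = A.transition c *ᵥ A.future w := rfl

theorem pushforward_dotProduct_future (x : A.Q → S) (u v : List α) :
    A.pushforward x u ⬝ᵥ A.future v = x ⬝ᵥ A.future (u ++ v) := by
  induction u generalizing x with
  | nil => rfl
  | cons c u ih =>
    calc A.pushforward (x ᵥ* A.transition c) u ⬝ᵥ A.future v
        = (x ᵥ* A.transition c) ⬝ᵥ A.future (u ++ v) := ih _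
      _ = x ⬝ᵥ A.future (c :: (u ++ v)) := by rw [future_cons, dotProduct_mulVec]

theorem hankel_apply_eq_past_dotProduct_future (u v : List α) :
    A.hankel u v = A.past u ⬝ᵥ A.future v :=
  (A.pushforward_dotProduct_future A.ι u v).symm

theorem hankel_submatrix_eq_mul {m n : Type*} (u : m → List α) (v : n → List α) :
    A.hankel.submatrix u v = of (fun i => A.past (u i)) * (of fun j => A.future (v j))ᵀ := by
  ext i j
  exact A.hankel_apply_eq_past_dotProduct_future (u i) (v j)

variable {A}

theorem exists_eq_append_pathEnd_eq {p q : A.Q} {l : List (α × A.Q)}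
    (hq : q = p ∨ q ∈ l.map Prod.snd) : ∃ l₁ l₂, l = l₁ ++ l₂ ∧ A.pathEnd p l₁ = q := by
  induction l generalizing p with
  | nil => exact ⟨[], [], rfl, by simpa [pathEnd, eq_comm] using hq⟩
  | cons a l ih =>
    obtain rfl | hq := hq
    · exact ⟨[], a :: l, rfl, rfl⟩
    · obtain ⟨l₁, l₂, rfl, hl₁⟩ := ih (p := a.2) (by simpa using hq)
      exact ⟨a :: l₁, l₂, rfl, hl₁⟩

theorem isPath_append {p : A.Q} {l₁ l₂ : List (α × A.Q)} :
    A.IsPath p (l₁ ++ l₂) ↔ A.IsPath p l₁ ∧ A.IsPath (A.pathEnd p l₁) l₂ := by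
  induction l₁ generalizing p with
  | nil => exact (iff_of_eq (true_and _)).symm
  | cons a l₁ ih => simp only [List.cons_append, IsPath, pathEnd, ih, and_assoc]

theorem pathEnd_append (p : A.Q) (l₁ l₂ : List (α × A.Q)) :
    A.pathEnd p (l₁ ++ l₂) = A.pathEnd (A.pathEnd p l₁) l₂ := by
  induction l₁ generalizing p with
  | nil => rfl
  | cons a _ ih => exact ih a.2

theorem pathWeight_append (p : A.Q) (l₁ l₂ : List (α × A.Q)) :
    A.pathWeight p (l₁ ++ l₂) = A.pathWeight p l₁ * A.pathWeight (A.pathEnd p l₁) l₂ := by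
  induction l₁ generalizing p with
  | nil => exact (one_mul _).symm
  | cons a l₁ ih => simp only [List.cons_append, pathWeight, pathEnd, ih, mul_assoc]

variable (A) in
/-- At most one initial state, and at most one transition from each state upon each letter. -/
def Deterministic : Prop :=
  (∀ p q, A.ι p ≠ 0 → A.ι q ≠ 0 → p = q) ∧
  (∀ p c q q', A.σ p c q ≠ 0 → A.σ p c q' ≠ 0 → q = q')

variable (A) in
/-- At most one terminal state, and at most one transition into each state upon each letter. -/
def Codeterministic : Prop :=
  (∀ p q, A.τ p ≠ 0 → A.τ q ≠ 0 → p = q) ∧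
  (∀ p p' c q, A.σ p c q ≠ 0 → A.σ p' c q ≠ 0 → p = p')

theorem bideterministic_iff : A.Bideterministic ↔ A.Deterministic ∧ A.Codeterministic := by
  unfold Bideterministic Deterministic Codeterministic
  tauto

section Runs

variable [DecidableEq A.Q] {p : A.Q} {l : List (α × A.Q)}

theorem Deterministic.pushforward_single_eq_single (hA : A.Deterministic) (hl : A.IsPath p l)
    (x : S) : A.pushforward (Pi.single p x) (l.map Prod.fst) =
      Pi.single (A.pathEnd p l) (x * A.pathWeight p l) := by
  induction l generalizing p x with
  | nil => simp [pushforward, pathEnd, pathWeight]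
  | cons a l ih =>
    obtain ⟨c, q⟩ := a
    have hrow : (A.transition c).row p = Pi.single q (A.σ p c q) :=
      eq_piSingle_of_forall_ne_zero fun r hr => hA.2 p c r q hr hl.1
    have hstep : Pi.single p x ᵥ* A.transition c = Pi.single q (x * A.σ p c q) := by
      rw [single_vecMul, hrow, ← Pi.single_smul, smul_eq_mul]
    calc A.pushforward (Pi.single p x ᵥ* A.transition c) (l.map Prod.fst)
        = Pi.single (A.pathEnd q l) (x * A.σ p c q * A.pathWeight q l) := by
          rw [hstep, ih hl.2]
      _ = Pi.single (A.pathEnd p ((c, q) :: l)) (x * A.pathWeight p ((c, q) :: l)) := by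
          rw [mul_assoc]; rfl

theorem Deterministic.past_eq_single (hA : A.Deterministic) (hp : A.ι p ≠ 0)
    (hl : A.IsPath p l) : A.past (l.map Prod.fst) =
      Pi.single (A.pathEnd p l) (A.ι p * A.pathWeight p l) := by
  have hι : A.ι = Pi.single p (A.ι p) := eq_piSingle_of_forall_ne_zero fun q hq => hA.1 q p hq hp
  rw [past, hι, hA.pushforward_single_eq_single hl, Pi.single_eq_same]

theorem Codeterministic.future_eq_single (hA : A.Codeterministic) (hl : A.IsPath p l)
    (hτ : A.τ (A.pathEnd p l) ≠ 0) : A.future (l.map Prod.fst) =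
      Pi.single p (A.pathWeight p l * A.τ (A.pathEnd p l)) := by
  induction l generalizing p with
  | nil =>
    rw [pathWeight, one_mul]
    exact eq_piSingle_of_forall_ne_zero fun q hq => hA.1 q p hq hτ
  | cons a l ih =>
    obtain ⟨c, q⟩ := a
    have hcol : (A.transition c).col q = Pi.single p (A.σ p c q) :=
      eq_piSingle_of_forall_ne_zero fun r hr => hA.2 r p c q hr hl.1
    rw [List.map_cons, future_cons, ih hl.2 hτ, mulVec_single, hcol, ← Pi.single_smul,
      op_smul_eq_mul, ← mul_assoc]
    rfl

theorem SemanticallyTrim.exists_past_future_eq_single (htrim : A.SemanticallyTrim)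
    (hdet : A.Deterministic) (hcodet : A.Codeterministic) (q : A.Q) :
    ∃ (u v : List α) (x y : S),
      A.past u = Pi.single q x ∧ A.future v = Pi.single q y ∧ x * y ≠ 0 := by
  obtain ⟨p, l, hl, hq, hweight⟩ := htrim q
  obtain ⟨l₁, l₂, rfl, rfl⟩ := exists_eq_append_pathEnd_eq hq
  obtain ⟨hl₁, hl₂⟩ := isPath_append.mp hl
  rw [pathEnd_append, pathWeight_append] at hweight
  have hι : A.ι p ≠ 0 := left_ne_zero_of_mul (left_ne_zero_of_mul hweight)
  have hτ : A.τ (A.pathEnd (A.pathEnd p l₁) l₂) ≠ 0 := right_ne_zero_of_mul hweight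
  refine ⟨_, _, _, _, hdet.past_eq_single hι hl₁, hcodet.future_eq_single hl₂ hτ, ?_⟩
  simpa only [mul_assoc] using hweight

theorem SemanticallyTrim.exists_hankel_submatrix_eq_diagonal (htrim : A.SemanticallyTrim)
    (hbidet : A.Bideterministic) : ∃ (u v : A.Q → List α) (d : A.Q → S),
      (∀ q, d q ≠ 0) ∧ A.hankel.submatrix u v = diagonal d := by
  obtain ⟨hdet, hcodet⟩ := bideterministic_iff.mp hbidet
  choose u v x y hu hv hxy using htrim.exists_past_future_eq_single hdet hcodet
  refine ⟨u, v, fun q => x q * y q, hxy, ?_⟩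
  ext q r
  rw [submatrix_apply, hankel_apply_eq_past_dotProduct_future, hu, hv, single_dotProduct]
  obtain rfl | hqr := eq_or_ne q r
  · rw [Pi.single_eq_same, diagonal_apply_eq]
  · rw [Pi.single_eq_of_ne hqr, mul_zero, diagonal_apply_ne _ hqr]

end Runs

theorem card_le_states_of_hankel_submatrix_eq_diagonal {R : Type} [Ring R] [PreValuationRing R]
    {B : WeightedAutomaton R α} {n : Type*} [Fintype n] [DecidableEq n] {u v : n → List α}
    {d : n → R} (hd : ∀ i, d i ≠ 0) (huv : B.hankel.submatrix u v = diagonal d) :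
    Fintype.card n ≤ B.states :=
  card_le_card_of_mul_eq_diagonal hd ((B.hankel_submatrix_eq_mul u v).symm.trans huv)

end WeightedAutomaton

/-- Since `a ∣ b` means `∃ c, b = a * c`, over a noncommutative ring `PreValuationRing R` says that
the right ideals of `R` are totally ordered by inclusion. -/
theorem semanticallyTrim_bideterministic_minimal_zmod_prime_pow_general
    {R : Type} [Ring R] [PreValuationRing R] {α : Type} (A : WeightedAutomaton R α)
    (htrim : A.SemanticallyTrim) (hbidet : A.Bideterministic) : A.Minimal := by
  classical
  intro B hB
  obtain ⟨u, v, d, hd, hA⟩ := htrim.exists_hankel_submatrix_eq_diagonal hbidet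
  have hhankel : B.hankel = A.hankel := by
    unfold WeightedAutomaton.hankel
    rw [hB]
  exact WeightedAutomaton.card_le_states_of_hankel_submatrix_eq_diagonal hd (hhankel ▸ hA)

/-- Every semantically trim bideterministic weighted automaton over `ZMod p^k`
(`p` prime, `k ∈ ℕ`) is minimal. -/
theorem semanticallyTrim_bideterministic_minimal_zmod_prime_pow
    (p k : ℕ) (hp : p.Prime) {α : Type} [Fintype α] [Nonempty α]
    (A : WeightedAutomaton (ZMod (p ^ k)) α)
    (htrim : A.SemanticallyTrim) (hbidet : A.Bideterministic) :
    A.Minimal := by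
  have : Fact p.Prime := ⟨hp⟩
  have := preValuationRing_zmod_prime_pow p k
  exact semanticallyTrim_bideterministic_minimal_zmod_prime_pow_general A htrim hbidet
end

section
/- Let S be a positive semiring, i.e., a semiring that is both zero-sum free (a + b = 0 implies a = 0 and b = 0) and zero-divisor free (a·b = 0 implies a = 0 or b = 0). Then every trim bideterministic weighted automaton over S is minimal: every weighted automaton over S with the same behaviour has at least as many states. -/
/-!
Over a positive semiring a sum of products vanishes exactly when each of its products has a zero
factor, so the support of the behaviour of an automaton is the language of its underlying
nondeterministic automaton. For each state `q` of a trim automaton choose a word `u q` leading from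
an initial state to `q` and a word `v q` leading from `q` to a terminal state. If the automaton is
bideterministic, reading `u q` forwards ends only in `q` and reading `v q'` backwards ends only in
`q'`, so `u q ++ v q'` is accepted only for `q = q'`. In any automaton with the same support, the
states passed between `u q` and `v q` on accepting runs are then distinct for distinct `q`.
-/

/-- The pairs `(u i, v i)` form a fooling set for `L`: each `u i ++ v i` is in `L`, while for
`i ≠ j` at least one of the crossed words `u i ++ v j` and `u j ++ v i` is not. Fooling sets bound
the number of states of nondeterministic automata from below. -/
structure IsFoolingSet {α ι : Type*} (L : Language α) (u v : ι → List α) : Prop where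
  append_mem : ∀ i, u i ++ v i ∈ L
  eq_of_append_mem : ∀ i j, u i ++ v j ∈ L → u j ++ v i ∈ L → i = j

section NFA

variable {α Q : Type*} {M : NFA α Q}

theorem mem_acceptsFrom_iff_exists_singleton {X : Set Q} {w : List α} :
    w ∈ M.acceptsFrom X ↔ ∃ q ∈ X, w ∈ M.acceptsFrom {q} := by
  simp only [NFA.mem_acceptsFrom, M.mem_evalFrom_iff_exists (S := X)]
  tauto

theorem cons_mem_acceptsFrom_singleton_iff {p : Q} {c : α} {w : List α} :
    c :: w ∈ M.acceptsFrom {p} ↔ ∃ q ∈ M.step p c, w ∈ M.acceptsFrom {q} := by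
  rw [NFA.cons_mem_acceptsFrom, NFA.stepSet_singleton, mem_acceptsFrom_iff_exists_singleton]

theorem append_mem_accepts_iff {u v : List α} :
    u ++ v ∈ M.accepts ↔ ∃ q ∈ M.eval u, v ∈ M.acceptsFrom {q} := by
  rw [NFA.accepts_eq_acceptsFrom_start, NFA.append_mem_acceptsFrom,
    mem_acceptsFrom_iff_exists_singleton, NFA.eval]

theorem evalFrom_subsingleton (hstep : ∀ p c, (M.step p c).Subsingleton) {X : Set Q}
    (hX : X.Subsingleton) (w : List α) : (M.evalFrom X w).Subsingleton := by
  induction w generalizing X with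
  | nil => exact hX
  | cons c _ ih =>
    refine ih fun q hq q' hq' => ?_
    obtain ⟨p, hp, hpq⟩ := NFA.mem_stepSet.1 hq
    obtain ⟨p', hp', hpq'⟩ := NFA.mem_stepSet.1 hq'
    obtain rfl := hX hp hp'
    exact hstep p c hpq hpq'

theorem eq_of_mem_acceptsFrom_singleton (haccept : M.accept.Subsingleton)
    (hstep : ∀ p p' c q, q ∈ M.step p c → q ∈ M.step p' c → p = p') {p p' : Q} {w : List α}
    (hp : w ∈ M.acceptsFrom {p}) (hp' : w ∈ M.acceptsFrom {p'}) : p = p' := by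
  induction w generalizing p p' with
  | nil =>
    obtain ⟨_, rfl, mem_accept⟩ := M.nil_mem_acceptsFrom.1 hp
    obtain ⟨_, rfl, mem_accept'⟩ := M.nil_mem_acceptsFrom.1 hp'
    exact haccept mem_accept mem_accept'
  | cons c _ ih =>
    obtain ⟨q, hpq, hq⟩ := cons_mem_acceptsFrom_singleton_iff.1 hp
    obtain ⟨q', hpq', hq'⟩ := cons_mem_acceptsFrom_singleton_iff.1 hp'
    obtain rfl := ih hq hq'
    exact hstep p p' c q hpq hpq'

theorem IsFoolingSet.card_le_card_states {ι : Type*} [Fintype ι] [Fintype Q] {u v : ι → List α}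
    (h : IsFoolingSet M.accepts u v) : Fintype.card ι ≤ Fintype.card Q := by
  have exists_middle (i : ι) : ∃ q ∈ M.eval (u i), v i ∈ M.acceptsFrom {q} :=
    append_mem_accepts_iff.1 (h.append_mem i)
  choose middle mem_eval mem_acceptsFrom using exists_middle
  refine Fintype.card_le_of_injective middle fun i j hij => h.eq_of_append_mem i j ?_ ?_
  · exact append_mem_accepts_iff.2 ⟨middle j, hij ▸ mem_eval i, mem_acceptsFrom j⟩
  · exact append_mem_accepts_iff.2 ⟨middle i, hij ▸ mem_eval j, mem_acceptsFrom i⟩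

end NFA

namespace WeightedAutomaton

variable {S : Type} [Semiring S] {α : Type} {A : WeightedAutomaton S α}

/-- The nondeterministic automaton underlying a weighted automaton, whose transitions, start states
and accepting states are those of nonzero weight. -/
def toNFA (A : WeightedAutomaton S α) : NFA α A.Q where
  step p c := {q | A.σ p c q ≠ 0}
  start := {q | A.ι q ≠ 0}
  accept := {q | A.τ q ≠ 0}

section Support

variable [NoZeroDivisors S] [Subsingleton (AddUnits S)]

theorem future_ne_zero_iff {w : List α} {q : A.Q} :
    A.future w q ≠ 0 ↔ w ∈ A.toNFA.acceptsFrom {q} := by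
  induction w generalizing q with
  | nil => simp [future, toNFA]
  | cons c w ih =>
    rw [cons_mem_acceptsFrom_singleton_iff]
    simp only [← ih]
    simp [future, toNFA]

theorem behaviour_ne_zero_iff (A : WeightedAutomaton S α) {w : List α} :
    A.behaviour w ≠ 0 ↔ w ∈ A.toNFA.accepts := by
  rw [NFA.accepts_eq_acceptsFrom_start, mem_acceptsFrom_iff_exists_singleton]
  simp only [← future_ne_zero_iff]
  simp [behaviour, toNFA]

end Support

theorem IsPath.pathEnd_mem_evalFrom {p : A.Q} {l : List (α × A.Q)} (hl : A.IsPath p l) :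
    A.pathEnd p l ∈ A.toNFA.evalFrom {p} (l.map Prod.fst) := by
  induction l generalizing p with
  | nil => rfl
  | cons step l ih =>
    rw [List.map_cons, NFA.evalFrom_cons, NFA.stepSet_singleton, NFA.mem_evalFrom_iff_exists]
    exact ⟨step.2, hl.1, ih hl.2⟩

theorem Accessible.exists_mem_eval {q : A.Q} (hq : A.Accessible q) :
    ∃ u, q ∈ A.toNFA.eval u := by
  obtain ⟨p, l, hp, hl, rfl⟩ := hq
  exact ⟨l.map Prod.fst, NFA.mem_evalFrom_iff_exists.2 ⟨p, hp, hl.pathEnd_mem_evalFrom⟩⟩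

theorem Coaccessible.exists_mem_acceptsFrom {q : A.Q} (hq : A.Coaccessible q) :
    ∃ v, v ∈ A.toNFA.acceptsFrom {q} := by
  obtain ⟨l, hl, hτ⟩ := hq
  exact ⟨l.map Prod.fst, A.pathEnd q l, hτ, hl.pathEnd_mem_evalFrom⟩

namespace Bideterministic

theorem eval_subsingleton (hA : A.Bideterministic) (w : List α) :
    (A.toNFA.eval w).Subsingleton :=
  evalFrom_subsingleton (M := A.toNFA) (fun p c q hq q' hq' => hA.2.2.1 p c q q' hq hq')
    (fun p hp q hq => hA.1 p q hp hq) w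

theorem eq_of_mem_acceptsFrom (hA : A.Bideterministic) {p p' : A.Q} {w : List α}
    (hp : w ∈ A.toNFA.acceptsFrom {p}) (hp' : w ∈ A.toNFA.acceptsFrom {p'}) : p = p' :=
  eq_of_mem_acceptsFrom_singleton (M := A.toNFA) (fun q hq q' hq' => hA.2.1 q q' hq hq')
    hA.2.2.2 hp hp'

theorem exists_isFoolingSet (hA : A.Bideterministic) (htrim : A.Trim) :
    ∃ u v : A.Q → List α, IsFoolingSet A.toNFA.accepts u v := by
  choose u mem_eval using fun q => (htrim q).1.exists_mem_eval
  choose v mem_acceptsFrom using fun q => (htrim q).2.exists_mem_acceptsFrom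
  refine ⟨u, v, fun q => ?_, fun q q' hqq' _ => ?_⟩
  · exact append_mem_accepts_iff.2 ⟨q, mem_eval q, mem_acceptsFrom q⟩
  · obtain ⟨r, hr, hr'⟩ := append_mem_accepts_iff.1 hqq'
    calc
      q = r := hA.eval_subsingleton (u q) (mem_eval q) hr
      _ = q' := hA.eq_of_mem_acceptsFrom hr' (mem_acceptsFrom q')

end Bideterministic

end WeightedAutomaton

theorem trim_bideterministic_minimal_of_positive_general
    {S T : Type} [Semiring S] [NoZeroDivisors S] [Subsingleton (AddUnits S)]
    [Semiring T] [NoZeroDivisors T] [Subsingleton (AddUnits T)] {α : Type}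
    {A : WeightedAutomaton S α} (htrim : A.Trim) (hbidet : A.Bideterministic)
    {B : WeightedAutomaton T α}
    (hsupport : Function.support B.behaviour = Function.support A.behaviour) :
    A.states ≤ B.states := by
  have accepts_eq : A.toNFA.accepts = B.toNFA.accepts := by
    ext w
    rw [← A.behaviour_ne_zero_iff, ← B.behaviour_ne_zero_iff, ← Function.mem_support,
      ← Function.mem_support, hsupport]
  obtain ⟨u, v, hfooling⟩ := hbidet.exists_isFoolingSet htrim
  rw [accepts_eq] at hfooling
  exact hfooling.card_le_card_states

/-- Every trim bideterministic weighted automaton over a positive semiring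
(i.e. a zero-sum free and zero-divisor free semiring) is minimal. -/
theorem trim_bideterministic_minimal_of_positive
    {S : Type} [Semiring S]
    (hzerosumfree : ∀ a b : S, a + b = 0 → a = 0 ∧ b = 0)
    (hzerodivfree : ∀ a b : S, a * b = 0 → a = 0 ∨ b = 0)
    {α : Type} [Fintype α] [Nonempty α]
    (A : WeightedAutomaton S α) (htrim : A.Trim) (hbidet : A.Bideterministic) :
    A.Minimal := by
  have : NoZeroDivisors S := ⟨hzerodivfree _ _⟩
  have : Subsingleton (AddUnits S) :=
    subsingleton_of_forall_eq 0 fun a => AddUnits.ext (hzerosumfree _ _ a.val_neg).1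
  exact fun B hB =>
    trim_bideterministic_minimal_of_positive_general htrim hbidet (congrArg Function.support hB)
end

section
/- Let R₀ be the subring of the polynomial ring ℚ[x,y] generated over ℚ by all monomials x^m·y^n with m + n ≥ 2, and let Σ = {a} be a one-letter alphabet. Consider the series r : Σ* → ℚ[x,y] defined by r(aᵗ) = (x + y)^{t+2} for every t ∈ ℕ. Then: (1) r is the behaviour of a weighted automaton whose weights all lie in R₀; (2) r is the behaviour of a bideterministic weighted automaton over the field ℚ(x,y) of rational fractions; but (3) there is no bideterministic weighted automaton whose weights all lie in R₀ and whose behaviour equals r. -/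
noncomputable section

open MvPolynomial

/-- The polynomial ring `ℚ[x,y]`, with `x = X 0` and `y = X 1`. -/
abbrev PolyQ : Type := MvPolynomial (Fin 2) ℚ

/-- The subring `R₀` of `ℚ[x,y]` generated over `ℚ` by all monomials
`x^m * y^n` with `m + n ≥ 2`. -/
def R0 : Subalgebra ℚ PolyQ :=
  Algebra.adjoin ℚ {f : PolyQ | ∃ m n : ℕ, 2 ≤ m + n ∧ f = X 0 ^ m * X 1 ^ n}

/-- The series over the one-letter alphabet `Unit` sending `aᵗ` to
`(x + y)^(t+2)`. -/
def powSeries : List Unit → PolyQ := fun w => (X 0 + X 1) ^ (w.length + 2)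

/-- All weights of a weighted automaton over `ℚ[x,y]` lie in `R₀`. -/
def weightsInR0 (A : WeightedAutomaton PolyQ Unit) : Prop :=
  (∀ q c q', A.σ q c q' ∈ R0) ∧ (∀ q, A.ι q ∈ R0) ∧ (∀ q, A.τ q ∈ R0)

/-!
`R₀` consists of the polynomials without linear terms, so it contains every power of `s = x + y`
except `s` itself. An automaton with one loop of weight `s` realises the series over any ring
containing `s`, and unfolding this loop into a cycle of length two replaces `s` by `s²` at the price
of a second initial state. Conversely, an automaton with a single initial and a single terminal
state that accepts the empty word has to begin and end in the same state `q`, so the quotient `s` of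
its values on `a` and on the empty word is the weight of the loop at `q`.
-/

namespace WeightedAutomaton

open Function (support)

variable {S : Type} {α : Type}

section Semiring

variable [Semiring S]

theorem Bideterministic.subsingleton_support_ι {A : WeightedAutomaton S α}
    (hA : A.Bideterministic) : (support A.ι).Subsingleton :=
  fun p hp q hq => hA.1 p q hp hq

theorem Bideterministic.subsingleton_support_τ {A : WeightedAutomaton S α}
    (hA : A.Bideterministic) : (support A.τ).Subsingleton :=
  fun p hp q hq => hA.2.1 p q hp hq

theorem bideterministic_of_subsingleton (A : WeightedAutomaton S α) [Subsingleton A.Q] :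
    A.Bideterministic :=
  ⟨fun _ _ _ _ => Subsingleton.elim _ _, fun _ _ _ _ => Subsingleton.elim _ _,
    fun _ _ _ _ _ _ => Subsingleton.elim _ _, fun _ _ _ _ _ _ => Subsingleton.elim _ _⟩

/-- The automaton with a single state, of initial weight `a` and terminal weight `1`, in which every
letter labels a loop of weight `s`. It realises the geometric series `w ↦ a * s ^ |w|`. -/
def loop (α : Type) (a s : S) : WeightedAutomaton S α where
  Q := Unit
  σ _ _ _ := s
  ι _ := a
  τ _ := 1

theorem loop_bideterministic (a s : S) : (loop α a s).Bideterministic :=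
  haveI : Subsingleton (loop α a s).Q := inferInstanceAs (Subsingleton Unit)
  bideterministic_of_subsingleton _

theorem future_loop (a s : S) (w : List α) : (loop α a s).future w = fun _ => s ^ w.length := by
  induction w with
  | nil => exact funext fun _ => (pow_zero s).symm
  | cons c w ih =>
    funext q
    calc (loop α a s).future (c :: w) q
        = ∑ p : Unit, s * (loop α a s).future w p := rfl
      _ = s ^ (c :: w).length := by simp [ih, pow_succ']

theorem behaviour_loop (a s : S) (w : List α) : (loop α a s).behaviour w = a * s ^ w.length := by
  calc (loop α a s).behaviour w
      = ∑ p : Unit, a * (loop α a s).future w p := rfl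
    _ = a * s ^ w.length := by simp [future_loop]

/-- The automaton on states `0` and `1` in which every letter labels a transition from `0` to `1` of
weight `d` and one back of weight `1`. The initial weights are `a` at `0` and `b` at `1`, and only
`0` is terminal, so `a` and `b` start the runs upon words of even and odd length, respectively. -/
def twoCycle (α : Type) (a b d : S) : WeightedAutomaton S α where
  Q := Fin 2
  σ p _ q := !![0, d; 1, 0] p q
  ι := ![a, b]
  τ := ![1, 0]

section twoCycle

variable (a b d : S)

theorem future_twoCycle_cons_zero (c : α) (w : List α) :
    (twoCycle α a b d).future (c :: w) (0 : Fin 2) =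
      d * (twoCycle α a b d).future w (1 : Fin 2) := by
  calc (twoCycle α a b d).future (c :: w) (0 : Fin 2)
      = ∑ p : Fin 2, !![0, d; 1, 0] 0 p * (twoCycle α a b d).future w p := rfl
    _ = _ := by simp [Fin.sum_univ_two]

theorem future_twoCycle_cons_one (c : α) (w : List α) :
    (twoCycle α a b d).future (c :: w) (1 : Fin 2) =
      (twoCycle α a b d).future w (0 : Fin 2) := by
  calc (twoCycle α a b d).future (c :: w) (1 : Fin 2)
      = ∑ p : Fin 2, !![0, d; 1, 0] 1 p * (twoCycle α a b d).future w p := rfl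
    _ = _ := by simp [Fin.sum_univ_two]

end twoCycle

theorem future_twoCycle_sq (a b s : S) (w : List α) :
    (twoCycle α a b (s ^ 2)).future w (0 : Fin 2) +
      s * (twoCycle α a b (s ^ 2)).future w (1 : Fin 2) = s ^ w.length := by
  induction w with
  | nil => simp [future, twoCycle]
  | cons c w ih =>
    rw [future_twoCycle_cons_zero, future_twoCycle_cons_one, List.length_cons,
      pow_succ' s w.length, ← ih, mul_add, ← mul_assoc, ← sq, add_comm]

theorem behaviour_twoCycle_sq (a s : S) (w : List α) :
    (twoCycle α a (a * s) (s ^ 2)).behaviour w = a * s ^ w.length := by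
  calc (twoCycle α a (a * s) (s ^ 2)).behaviour w
      = ∑ q : Fin 2, ![a, a * s] q * (twoCycle α a (a * s) (s ^ 2)).future w q := rfl
    _ = a * s ^ w.length := by
      rw [← future_twoCycle_sq a (a * s)]
      simp [Fin.sum_univ_two, mul_add, mul_assoc]

theorem exists_behaviour_nil_singleton_eq {A : WeightedAutomaton S α}
    (hι : (support A.ι).Subsingleton) (hτ : (support A.τ).Subsingleton)
    (hA : A.behaviour [] ≠ 0) :
    ∃ q, A.behaviour [] = A.ι q * A.τ q ∧
      ∀ c, A.behaviour [c] = A.ι q * (A.σ q c q * A.τ q) := by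
  obtain ⟨q, -, hq⟩ := Finset.exists_ne_zero_of_sum_ne_zero hA
  have ι_eq_zero {p : A.Q} (hp : p ≠ q) : A.ι p = 0 :=
    not_imp_comm.1 (fun h => hι h (left_ne_zero_of_mul hq)) hp
  have τ_eq_zero {p : A.Q} (hp : p ≠ q) : A.τ p = 0 :=
    not_imp_comm.1 (fun h => hτ h (right_ne_zero_of_mul hq)) hp
  have behaviour_eq (w : List α) : A.behaviour w = A.ι q * A.future w q :=
    Fintype.sum_eq_single q fun p hp => by rw [ι_eq_zero hp, zero_mul]
  have future_singleton_eq (c : α) : A.future [c] q = A.σ q c q * A.τ q :=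
    Fintype.sum_eq_single q fun p hp => by rw [future, τ_eq_zero hp, mul_zero]
  exact ⟨q, behaviour_eq [], fun c => by rw [behaviour_eq, future_singleton_eq]⟩

end Semiring

theorem exists_σ_self_eq [CommSemiring S] [IsCancelMulZero S] {A : WeightedAutomaton S α}
    (hι : (support A.ι).Subsingleton) (hτ : (support A.τ).Subsingleton)
    (hA : A.behaviour [] ≠ 0) {c : α} {s : S} (hs : A.behaviour [c] = A.behaviour [] * s) :
    ∃ q, A.σ q c q = s := by
  obtain ⟨q, hnil, hsingleton⟩ := exists_behaviour_nil_singleton_eq hι hτ hA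
  refine ⟨q, mul_left_cancel₀ hA ?_⟩
  calc A.behaviour [] * A.σ q c q
      = A.ι q * (A.σ q c q * A.τ q) := by rw [hnil]; ring
    _ = A.behaviour [] * s := by rw [← hsingleton, hs]

end WeightedAutomaton

theorem coeff_single_one_mul {σ R : Type*} [CommSemiring R] (i : σ) (p q : MvPolynomial σ R) :
    coeff (.single i 1) (p * q) =
      coeff 0 p * coeff (.single i 1) q + coeff (.single i 1) p * coeff 0 q := by
  classical
  simp [coeff_mul, Finsupp.antidiagonal_single, Finset.Nat.antidiagonal_succ]

theorem coeff_single_one_eq_zero_of_mem_R0 {f : PolyQ} (hf : f ∈ R0) (i : Fin 2) :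
    coeff (.single i 1) f = 0 := by
  induction hf using Algebra.adjoin_induction with
  | mem f hf =>
    obtain ⟨m, n, hmn, rfl⟩ := hf
    have hhom : (X 0 ^ m * X 1 ^ n : PolyQ).IsHomogeneous (m + n) :=
      (isHomogeneous_X_pow 0 m).mul (isHomogeneous_X_pow 1 n)
    exact hhom.coeff_eq_zero (by rw [Finsupp.degree_single]; lia)
  | algebraMap r => exact (isHomogeneous_C _ r).coeff_eq_zero (by simp)
  | add f g _ _ hf hg => rw [coeff_add, hf, hg, add_zero]
  | mul f g _ _ hf hg => rw [coeff_single_one_mul, hf, hg, mul_zero, zero_mul, add_zero]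

theorem monomial_mem_R0 {d : Fin 2 →₀ ℕ} (hd : d.degree ≠ 1) (r : ℚ) :
    (monomial d r : PolyQ) ∈ R0 := by
  have hdeg : d.degree = d 0 + d 1 := by rw [Finsupp.degree_eq_sum, Fin.sum_univ_two]
  rcases eq_or_ne d.degree 0 with hzero | hpos
  · rw [(Finsupp.degree_eq_zero_iff d).1 hzero]
    exact R0.algebraMap_mem r
  · have hgen : (X 0 ^ d 0 * X 1 ^ d 1 : PolyQ) ∈ R0 :=
      Algebra.subset_adjoin ⟨d 0, d 1, by lia, rfl⟩
    rw [monomial_eq, Finsupp.prod_fintype _ _ fun i => pow_zero _, Fin.prod_univ_two, C_mul']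
    exact R0.smul_mem hgen r

theorem mem_R0_iff {f : PolyQ} : f ∈ R0 ↔ ∀ i, coeff (.single i 1) f = 0 := by
  refine ⟨coeff_single_one_eq_zero_of_mem_R0, fun hf => ?_⟩
  rw [f.as_sum]
  refine sum_mem fun d hd => monomial_mem_R0 (fun hdeg => ?_) _
  obtain ⟨i, rfl⟩ := (Finsupp.sum_eq_one_iff d).1 hdeg
  exact mem_support_iff.1 hd (hf i)

theorem mem_R0_of_isHomogeneous {f : PolyQ} {n : ℕ} (hf : f.IsHomogeneous n) (hn : n ≠ 1) :
    f ∈ R0 :=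
  mem_R0_iff.2 fun i => hf.coeff_eq_zero (by rwa [Finsupp.degree_single, ne_comm])

theorem X_add_X_notMem_R0 : (X 0 + X 1 : PolyQ) ∉ R0 := fun h => by
  simpa [coeff_single_X] using mem_R0_iff.1 h 0

theorem X_add_X_ne_zero : (X 0 + X 1 : PolyQ) ≠ 0 :=
  fun h => X_add_X_notMem_R0 (h ▸ zero_mem R0)

theorem X_add_X_pow_mem_R0 {n : ℕ} (hn : n ≠ 1) : ((X 0 + X 1) ^ n : PolyQ) ∈ R0 :=
  mem_R0_of_isHomogeneous (((isHomogeneous_X ℚ 0).add (isHomogeneous_X ℚ 1)).pow n)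
    (by rwa [one_mul])

theorem powSeries_eq (w : List Unit) :
    powSeries w = (X 0 + X 1) ^ 2 * (X 0 + X 1) ^ w.length := by
  rw [powSeries, ← pow_add, add_comm 2]

theorem weightsInR0_twoCycle {a b d : PolyQ} (ha : a ∈ R0) (hb : b ∈ R0) (hd : d ∈ R0) :
    weightsInR0 (.twoCycle Unit a b d) := by
  refine ⟨fun p _ q => ?_, Fin.forall_fin_two.2 ⟨ha, hb⟩,
    Fin.forall_fin_two.2 ⟨one_mem R0, zero_mem R0⟩⟩
  revert p q
  exact Fin.forall_fin_two.2 ⟨Fin.forall_fin_two.2 ⟨zero_mem R0, hd⟩,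
    Fin.forall_fin_two.2 ⟨one_mem R0, zero_mem R0⟩⟩

theorem exists_weightsInR0_behaviour_eq_powSeries :
    ∃ A : WeightedAutomaton PolyQ Unit, weightsInR0 A ∧ A.behaviour = powSeries := by
  refine ⟨.twoCycle Unit ((X 0 + X 1) ^ 2) ((X 0 + X 1) ^ 2 * (X 0 + X 1)) ((X 0 + X 1) ^ 2),
    weightsInR0_twoCycle (X_add_X_pow_mem_R0 (by simp)) ?_ (X_add_X_pow_mem_R0 (by simp)),
    funext fun w => by rw [WeightedAutomaton.behaviour_twoCycle_sq, powSeries_eq]⟩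
  rw [← pow_succ]
  exact X_add_X_pow_mem_R0 (by simp)

theorem exists_bideterministic_behaviour_eq_algebraMap_powSeries (S : Type) [Semiring S]
    [Algebra PolyQ S] :
    ∃ B : WeightedAutomaton S Unit,
      B.Bideterministic ∧ ∀ w, B.behaviour w = algebraMap PolyQ S (powSeries w) :=
  ⟨.loop Unit (algebraMap PolyQ S ((X 0 + X 1) ^ 2)) (algebraMap PolyQ S (X 0 + X 1)),
    WeightedAutomaton.loop_bideterministic _ _, fun w => by
      rw [WeightedAutomaton.behaviour_loop, powSeries_eq, map_mul, map_pow _ _ w.length]⟩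

theorem behaviour_ne_powSeries_of_weightsInR0 {C : WeightedAutomaton PolyQ Unit}
    (hι : (Function.support C.ι).Subsingleton) (hτ : (Function.support C.τ).Subsingleton)
    (hC : weightsInR0 C) : C.behaviour ≠ powSeries := fun h => by
  have hnil : C.behaviour [] ≠ 0 := by
    rw [h]
    exact pow_ne_zero 2 X_add_X_ne_zero
  have hsingleton : C.behaviour [()] = C.behaviour [] * (X 0 + X 1) := by
    rw [h]
    exact pow_succ _ 2
  obtain ⟨q, hq⟩ := WeightedAutomaton.exists_σ_self_eq hι hτ hnil hsingleton
  exact X_add_X_notMem_R0 (hq ▸ hC.1 q () q)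

theorem powSeries_behaviour_R0_bideterminisable_over_fractionField_not_over_R0_general :
    (∃ A : WeightedAutomaton PolyQ Unit,
        weightsInR0 A ∧ A.behaviour = powSeries) ∧
    (∀ (S : Type) [Semiring S] [Algebra PolyQ S],
      ∃ B : WeightedAutomaton S Unit,
        B.Bideterministic ∧
        ∀ w : List Unit, B.behaviour w = algebraMap PolyQ S (powSeries w)) ∧
    ¬ (∃ C : WeightedAutomaton PolyQ Unit,
        (Function.support C.ι).Subsingleton ∧ (Function.support C.τ).Subsingleton ∧
        weightsInR0 C ∧ C.behaviour = powSeries) :=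
  ⟨exists_weightsInR0_behaviour_eq_powSeries,
    fun S _ _ => exists_bideterministic_behaviour_eq_algebraMap_powSeries S,
    fun ⟨_, hι, hτ, hC, h⟩ => behaviour_ne_powSeries_of_weightsInR0 hι hτ hC h⟩

/-- The series `t ↦ (x+y)^(t+2)` over the one-letter alphabet is the behaviour
of a weighted automaton with all weights in `R₀`, and it is the behaviour of a
bideterministic weighted automaton over the field `ℚ(x,y)` of rational
fractions, yet it is not the behaviour of any bideterministic weighted
automaton with all weights in `R₀`. -/
theorem powSeries_behaviour_R0_bideterminisable_over_fractionField_not_over_R0 :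
    (∃ A : WeightedAutomaton PolyQ Unit,
        weightsInR0 A ∧ A.behaviour = powSeries) ∧
    (∃ B : WeightedAutomaton (FractionRing PolyQ) Unit,
        B.Bideterministic ∧
        ∀ w : List Unit,
          B.behaviour w = algebraMap PolyQ (FractionRing PolyQ) (powSeries w)) ∧
    ¬ (∃ C : WeightedAutomaton PolyQ Unit,
        C.Bideterministic ∧ weightsInR0 C ∧ C.behaviour = powSeries) := by
  obtain ⟨hA, hB, hC⟩ :=
    powSeries_behaviour_R0_bideterminisable_over_fractionField_not_over_R0_general
  exact ⟨hA, hB (FractionRing PolyQ), fun ⟨C, hdet, hR0, h⟩ =>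
    hC ⟨C, hdet.subsingleton_support_ι, hdet.subsingleton_support_τ, hR0, h⟩⟩

end
end
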